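/- Let p be a prime, E a group of type E(2) of order p^{2m+2} (a central product of an extraspecial p-group of order p^{2m+1} with a cyclic group of order p^2 amalgamating centers), and T a finite abelian p-group that is not elementary abelian (its exponent exceeds p). Set G = E × T, of order p^n. Then |M(G)| ≤ p^{(n-1)(n-2)/2 - 2}. -/

import Mathlib

/-- The kernel of the canonical free presentation `FreeGroup G → G`. -/
def presentationKernel (G : Type u) [Group G] : Subgroup (FreeGroup G) :=
  (FreeGroup.lift (id : G → G)).ker

/-- The Schur multiplier `M(G) = H₂(G, ℤ)` (second integral group homology) of a
group `G`, realised via Hopf's integral formula `H₂(G, ℤ) ≅ (R ⊓ [F, F]) / [F, R]`,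
where `F = FreeGroup G` is the canonical free group surjecting onto `G` with
kernel `R`. -/
def SchurMultiplier (G : Type u) [Group G] : Type u :=
  ↥(presentationKernel G ⊓ commutator (FreeGroup G)) ⧸
    (⁅(⊤ : Subgroup (FreeGroup G)), presentationKernel G⁆.subgroupOf
      (presentationKernel G ⊓ commutator (FreeGroup G)))

/-- A finite `p`-group `H` is extraspecial if its center, derived subgroup and
Frattini subgroup coincide and have order `p`. -/
def IsExtraspecial (p : ℕ) (H : Type*) [Group H] : Prop :=
  Subgroup.center H = commutator H ∧ Subgroup.center H = frattini H ∧
    Nat.card (Subgroup.center H) = p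

/-- `E` is a group of type `E(2)` (with parameter `m`): a central product of an
extraspecial `p`-group `H` of order `p^(2m+1)` with a cyclic group `K` of order
`p^2`, amalgamated over the center of `H`: `H` and `K` commute elementwise,
`E = HK` and `H ⊓ K = Z(H)`. -/
def IsTypeE2 (p m : ℕ) (E : Type*) [Group E] : Prop :=
  ∃ H K : Subgroup E,
    IsExtraspecial p H ∧ Nat.card H = p ^ (2 * m + 1) ∧
    IsCyclic K ∧ Nat.card K = p ^ 2 ∧
    (∀ h ∈ H, ∀ k ∈ K, h * k = k * h) ∧
    H ⊔ K = ⊤ ∧ (H ⊓ K).subgroupOf H = Subgroup.center H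

/-!
Let `F / R = G` be the canonical free presentation. By Hopf's formula, `|M(G)| * |G'|` is the order
of the derived subgroup of the central extension `X = F / [F, R]` of `G`.

For `G = E × T` every commutator is the `p`-th power of a central element, and `G` is generated by
its centre together with elements whose `p`-th powers lie in `G'`. Bilinearity of commutators with
lifts of central elements then shows that the whole preimage of `G'` in `X` is central, so the
commutator of `X` is an alternating pairing on `G / G'`, a group of order `p ^ N` with `N = n - 1`.

Adjoining one generator to a subgroup of order `p ^ i` of `G / G'` enlarges the group spanned by
the values of the pairing by a factor of at most `p ^ i`. As `T` is not elementary abelian, one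
can start from a cyclic subgroup of order at least `p ^ 2`, on which the pairing is trivial. Hence
`|X'|` divides `p ^ (2 + 3 + ⋯ + (N - 1)) = p ^ (N * (N - 1) / 2 - 1)`, and `|G'| = p`.
-/

open Subgroup
open scoped commutatorElement

section CentralCommutators

variable {X : Type*} [Group X]

/-- For `x` in the second centre of `X`, commutation with `x` is the homomorphism `y ↦ ⁅x, y⁆`;
membership in the second centre is encoded by centrality of every `⁅x, y⁆`. -/
def commutatorHom (x : X) (hx : ∀ y, ⁅x, y⁆ ∈ center X) : X →* X :=
  MonoidHom.mk' (fun y ↦ ⁅x, y⁆) fun y z ↦ by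
    rw [commutatorElement_mul_right_eq_mul_conj, mul_assoc _ y, mem_center_iff.1 (hx z) y,
      mul_assoc, mul_inv_cancel_right]

theorem commutatorElement_pow_left_of_mem_center {x y : X} (h : ⁅x, y⁆ ∈ center X) (n : ℕ) :
    ⁅x ^ n, y⁆ = ⁅x, y⁆ ^ n := by
  induction n with
  | zero => simp
  | succ n ih =>
    rw [pow_succ', commutatorElement_mul_left_eq_conj_mul, ih, mem_center_iff.1 (pow_mem h n) x,
      mul_inv_cancel_right, pow_succ]

theorem commutatorElement_pow_right_of_mem_center {x y : X} (h : ⁅x, y⁆ ∈ center X) (n : ℕ) :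
    ⁅x, y ^ n⁆ = ⁅x, y⁆ ^ n := by
  have h' : ⁅y, x⁆ ∈ center X := commutatorElement_inv x y ▸ inv_mem h
  rw [← commutatorElement_inv, commutatorElement_pow_left_of_mem_center h', ← inv_pow,
    commutatorElement_inv]

theorem commute_pow_left_iff_commute_pow_right {x y : X} (h : ⁅x, y⁆ ∈ center X) (n : ℕ) :
    Commute (x ^ n) y ↔ Commute x (y ^ n) := by
  rw [← commutatorElement_eq_one_iff_commute, ← commutatorElement_eq_one_iff_commute,
    commutatorElement_pow_left_of_mem_center h, commutatorElement_pow_right_of_mem_center h]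

theorem commute_of_mem_commutator {x d : X} (hx : ∀ y, ⁅x, y⁆ ∈ center X)
    (hd : d ∈ commutator X) : Commute x d := by
  have hle : commutator X ≤ (commutatorHom x hx).ker := by
    rw [commutator_def, commutator_le]
    intro a _ b _
    rw [MonoidHom.mem_ker, map_commutatorElement, commutatorElement_eq_one_iff_mul_comm]
    exact mem_center_iff.1 (hx b) _
  exact commutatorElement_eq_one_iff_commute.1 (hle hd)

end CentralCommutators

section ClassTwo

variable {X : Type*} [Group X]

theorem commutatorElement_mem_of_commutator_le {Z : Subgroup X} (hX : commutator X ≤ Z)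
    (x y : X) : ⁅x, y⁆ ∈ Z :=
  hX (commutator_mem_commutator (mem_top x) (mem_top y))

theorem commutator_sup_zpowers_le (hX : commutator X ≤ center X) (B : Subgroup X) (x : X) :
    ⁅B ⊔ zpowers x, B ⊔ zpowers x⁆ ≤
      ⁅B, B⁆ ⊔ B.map (commutatorHom x (commutatorElement_mem_of_commutator_le hX x)) := by
  set S := ⁅B, B⁆ ⊔ B.map (commutatorHom x (commutatorElement_mem_of_commutator_le hX x))
  have of_generators (a : X) (hB : ∀ b ∈ B, ⁅a, b⁆ ∈ S) (hx : ⁅a, x⁆ ∈ S) :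
      ∀ y ∈ B ⊔ zpowers x, ⁅a, y⁆ ∈ S := by
    suffices B ⊔ zpowers x ≤
        S.comap (commutatorHom a (commutatorElement_mem_of_commutator_le hX a)) from this
    exact sup_le hB (zpowers_le.2 hx)
  have hxB : ∀ b ∈ B, ⁅x, b⁆ ∈ S := fun b hb ↦ mem_sup_right ⟨b, hb, rfl⟩
  have hx : ∀ y ∈ B ⊔ zpowers x, ⁅x, y⁆ ∈ S :=
    of_generators x hxB (commutatorElement_self x ▸ one_mem S)
  have hB : ∀ b ∈ B, ∀ y ∈ B ⊔ zpowers x, ⁅b, y⁆ ∈ S := fun b hb ↦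
    of_generators b (fun c hc ↦ mem_sup_left (commutator_mem_commutator hb hc))
      (commutatorElement_inv x b ▸ inv_mem (hxB b hb))
  refine commutator_le.2 fun y hy ↦ of_generators y (fun b hb ↦ ?_) ?_
  · exact commutatorElement_inv b y ▸ inv_mem (hB b hb y hy)
  · exact commutatorElement_inv x y ▸ inv_mem (hx y hy)

variable {Z B : Subgroup X}

theorem card_commutator_sup_zpowers_dvd (hZ : Z ≤ center X) (hX : commutator X ≤ Z)
    (hB : Z ≤ B) (x : X) :
    Nat.card ↥⁅B ⊔ zpowers x, B ⊔ zpowers x⁆ ∣ Nat.card ↥⁅B, B⁆ * Z.relIndex B := by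
  have : B.Normal := .of_commutator_le _ (hX.trans hB)
  set f := commutatorHom x (commutatorElement_mem_of_commutator_le (hX.trans hZ) x)
  have hker : Z ≤ f.ker := fun z hz ↦
    commutatorElement_eq_one_iff_mul_comm.2 (mem_center_iff.1 (hZ hz) x)
  calc Nat.card ↥⁅B ⊔ zpowers x, B ⊔ zpowers x⁆
    _ ∣ Nat.card ↥(⁅B, B⁆ ⊔ B.map f) :=
      card_dvd_of_le (commutator_sup_zpowers_le (hX.trans hZ) B x)
    _ = Nat.card ↥⁅B, B⁆ * ⁅B, B⁆.relIndex (B.map f) := by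
      rw [← relIndex_bot_left, ← relIndex_mul_relIndex ⊥ _ _ bot_le le_sup_left,
        relIndex_bot_left, relIndex_sup_left]
    _ ∣ Nat.card ↥⁅B, B⁆ * Z.relIndex B := by
      refine mul_dvd_mul_left _ ((relIndex_dvd_card _ _).trans ?_)
      exact relIndex_ker B f ▸ relIndex_dvd_of_le_left B hker

theorem exists_relIndex_sup_zpowers_eq_pow {p N i : ℕ} (hp : p.Prime) (hN : Z.index = p ^ N)
    (hB : Z ≤ B) (hi : Z.relIndex B = p ^ i) {x : X} (hx : x ∉ B) :
    ∃ j, i < j ∧ j ≤ N ∧ Z.relIndex (B ⊔ zpowers x) = p ^ j := by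
  obtain ⟨j, hjN, hj⟩ := (Nat.dvd_prime_pow hp).1 (hN ▸ relIndex_dvd_index_of_le
    (hB.trans (le_sup_left : B ≤ B ⊔ zpowers x)))
  refine ⟨j, ?_, hjN, hj⟩
  have hmul : p ^ i * B.relIndex (B ⊔ zpowers x) = p ^ j := by
    rw [← hi, ← hj, relIndex_mul_relIndex _ _ _ hB le_sup_left]
  refine lt_of_le_of_ne ((Nat.pow_dvd_pow_iff_le_right hp.one_lt).1 (Dvd.intro _ hmul)) ?_
  rintro rfl
  have hle : B ⊔ zpowers x ≤ B :=
    relIndex_eq_one.1 (Nat.eq_of_mul_eq_mul_left (pow_pos hp.pos i) (hmul.trans (mul_one _).symm))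
  exact hx (hle (mem_sup_right (mem_zpowers x)))

theorem card_commutator_dvd_card_mul_pow_sum {p N i : ℕ} (hp : p.Prime) (hZ : Z ≤ center X)
    (hX : commutator X ≤ Z) (hN : Z.index = p ^ N) (hB : Z ≤ B) (hi : Z.relIndex B = p ^ i) :
    Nat.card (commutator X) ∣ Nat.card ↥⁅B, B⁆ * p ^ ∑ j ∈ Finset.Ico i N, j := by
  induction hd : N - i using Nat.strong_induction_on generalizing B i with
  | _ d ih =>
  by_cases hBtop : B = ⊤
  · subst hBtop
    exact dvd_mul_right _ _
  obtain ⟨x, -, hx⟩ := SetLike.exists_of_lt (lt_top_iff_ne_top.2 hBtop)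
  obtain ⟨j, hij, hjN, hj⟩ := exists_relIndex_sup_zpowers_eq_pow hp hN hB hi hx
  have hsum : i + ∑ l ∈ Finset.Ico j N, l ≤ ∑ l ∈ Finset.Ico i N, l := by
    rw [Finset.sum_eq_sum_Ico_succ_bot (hij.trans_le hjN)]
    gcongr
    exact hij
  calc Nat.card (commutator X)
    _ ∣ Nat.card ↥⁅B ⊔ zpowers x, B ⊔ zpowers x⁆ * p ^ ∑ l ∈ Finset.Ico j N, l :=
      ih (N - j) (by omega) (hB.trans le_sup_left) hj rfl
    _ ∣ Nat.card ↥⁅B, B⁆ * p ^ i * p ^ ∑ l ∈ Finset.Ico j N, l :=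
      mul_dvd_mul_right (hi ▸ card_commutator_sup_zpowers_dvd hZ hX hB x) _
    _ ∣ Nat.card ↥⁅B, B⁆ * p ^ ∑ l ∈ Finset.Ico i N, l := by
      rw [mul_assoc, ← pow_add]
      exact mul_dvd_mul_left _ (pow_dvd_pow p hsum)

theorem two_le_of_relIndex_sup_zpowers_eq_pow [Z.Normal] {p k : ℕ} {x : X}
    (hk : Z.relIndex (Z ⊔ zpowers x) = p ^ k) (hx : x ^ p ∉ Z) : 2 ≤ k := by
  by_contra! hk2
  have hmem : x ^ p ^ k ∈ Z := by
    rw [← hk, relIndex_sup_left]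
    exact (Z.subgroupOf (zpowers x)).pow_index_mem ⟨x, mem_zpowers x⟩
  obtain ⟨r, hr⟩ : p ^ k ∣ p := by simpa using pow_dvd_pow p (Nat.le_of_lt_succ hk2)
  rw [hr, pow_mul] at hx
  exact hx (pow_mem hmem r)

-- Starting the chain at `⟨Z, x⟩`, which is abelian of relative index at least `p ^ 2`, skips the
-- factor `p` that the second step of a chain starting at `Z` would contribute.
theorem card_commutator_dvd_of_pow_notMem {p N : ℕ} (hp : p.Prime) (hZ : Z ≤ center X)
    (hX : commutator X ≤ Z) (hN : Z.index = p ^ N) {x : X} (hx : x ^ p ∉ Z) :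
    Nat.card (commutator X) ∣ p ^ (N * (N - 1) / 2 - 1) := by
  have : Z.Normal := .of_commutator_le _ hX
  have hcomm : Nat.card ↥⁅Z ⊔ zpowers x, Z ⊔ zpowers x⁆ = 1 := by
    have hbot : ⁅Z, Z⁆ = ⊥ :=
      commutator_eq_bot_iff_le_centralizer.2 (hZ.trans (center_le_centralizer _))
    simpa only [hbot, card_bot, relIndex_self, mul_one, Nat.dvd_one] using
      card_commutator_sup_zpowers_dvd hZ hX le_rfl x
  obtain ⟨k, hkN, hk⟩ := (Nat.dvd_prime_pow hp).1 (hN ▸ relIndex_dvd_index_of_le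
    (le_sup_left : Z ≤ Z ⊔ zpowers x))
  have hk2 : 2 ≤ k := two_le_of_relIndex_sup_zpowers_eq_pow hk hx
  have hsum : ∑ j ∈ Finset.Ico k N, j ≤ N * (N - 1) / 2 - 1 := by
    have htwo : ∑ j ∈ Finset.Ico k N, j ≤ ∑ j ∈ Finset.Ico 2 N, j := by gcongr
    have hsplit := Finset.sum_Ico_consecutive (fun j ↦ j) (Nat.zero_le 2) (hk2.trans hkN)
    rw [← Finset.range_eq_Ico, ← Finset.range_eq_Ico, Finset.sum_range_id, Finset.sum_range_id]
      at hsplit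
    omega
  simpa only [hcomm, one_mul] using
    (card_commutator_dvd_card_mul_pow_sum hp hZ hX hN le_sup_left hk).trans
      (mul_dvd_mul_left _ (pow_dvd_pow p hsum))

end ClassTwo

section CentralExtension

variable {X G : Type*} [Group X] [Group G] {π : X →* G}

theorem commutatorElement_mem_center_of_map_mem_center (hker : π.ker ≤ center X) {x : X}
    (hx : π x ∈ center G) (y : X) : ⁅x, y⁆ ∈ center X :=
  hker <| by
    rw [MonoidHom.mem_ker, map_commutatorElement]
    exact commutatorElement_eq_one_iff_mul_comm.2 (mem_center_iff.1 hx (π y)).symm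

theorem commute_of_commute_of_map_eq (hker : π.ker ≤ center X) {x d c : X} (hxd : Commute x d)
    (hdc : π d = π c) : Commute x c := by
  have hcenter : d⁻¹ * c ∈ center X := hker (by simp [MonoidHom.mem_ker, hdc])
  simpa only [mul_inv_cancel_left] using
    hxd.mul_right (mem_center_iff.1 hcenter x : Commute x (d⁻¹ * c))

theorem commute_of_map_mem_center_of_map_mem_commutator (hπ : Function.Surjective π)
    (hker : π.ker ≤ center X) {x c : X} (hx : π x ∈ center G) (hc : π c ∈ commutator G) :
    Commute x c := by
  have hmap : commutator G = (commutator X).map π := by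
    rw [map_commutator_eq, MonoidHom.range_eq_top.2 hπ, commutator_def]
  obtain ⟨d, hd, hdc⟩ := hmap ▸ hc
  exact commute_of_commute_of_map_eq hker
    (commute_of_mem_commutator (commutatorElement_mem_center_of_map_mem_center hker hx) hd) hdc

-- With `z` a lift of a central `p`-th root of `π c`, `⁅x, z ^ p⁆ = ⁅x, z⁆ ^ p = ⁅x ^ p, z⁆`.
theorem commute_of_map_pow_mem_commutator (hπ : Function.Surjective π) (hker : π.ker ≤ center X)
    {p : ℕ} {x c : X} (hx : π x ^ p ∈ commutator G) (hc : ∃ z ∈ center G, z ^ p = π c) :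
    Commute x c := by
  obtain ⟨g, hg, hgc⟩ := hc
  obtain ⟨z, rfl⟩ := hπ g
  have hzx : Commute z (x ^ p) :=
    commute_of_map_mem_center_of_map_mem_commutator hπ hker hg (by rwa [map_pow])
  have hxz : Commute x (z ^ p) :=
    ((commute_pow_left_iff_commute_pow_right
      (commutatorElement_mem_center_of_map_mem_center hker hg x) p).2 hzx).symm
  exact commute_of_commute_of_map_eq hker hxz (by rw [map_pow, hgc])

theorem comap_commutator_le_center (hπ : Function.Surjective π) (hker : π.ker ≤ center X) {p : ℕ}
    (hroot : ∀ c ∈ commutator G, ∃ z ∈ center G, z ^ p = c)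
    (hgen : closure ({g : G | g ^ p ∈ commutator G} ∪ center G) = ⊤) :
    (commutator G).comap π ≤ center X := by
  intro c hc
  have hmap : (centralizer {c}).map π = ⊤ := by
    refine top_unique (hgen ▸ (closure_le _).2 fun g hg ↦ ?_)
    obtain ⟨x, rfl⟩ := hπ g
    refine ⟨x, mem_centralizer_singleton_iff.2 ?_, rfl⟩
    rcases hg with hg | hg
    · exact commute_of_map_pow_mem_commutator hπ hker hg (hroot _ hc)
    · exact commute_of_map_mem_center_of_map_mem_commutator hπ hker hg hc
  have htop : centralizer {c} = ⊤ := by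
    rw [← comap_map_eq_self (hker.trans (center_le_centralizer _)), hmap, comap_top]
  exact mem_center_iff.2 fun x ↦ mem_centralizer_singleton_iff.1 (htop ▸ mem_top x)

end CentralExtension

section SchurMultiplier

instance presentationKernel_normal (G : Type*) [Group G] : (presentationKernel G).Normal :=
  inferInstanceAs (FreeGroup.lift (id : G → G)).ker.Normal

/-- The free central extension `F / [F, R]` of `G`, where `F / R` is the canonical free
presentation of `G`. By Hopf's formula its derived subgroup is an extension of that of `G` by the
Schur multiplier of `G`. -/
abbrev FreeCentralExtension (G : Type u) [Group G] : Type u :=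
  FreeGroup G ⧸ ⁅(⊤ : Subgroup (FreeGroup G)), presentationKernel G⁆

namespace FreeCentralExtension

variable (G : Type*) [Group G]

/-- The projection `F / [F, R] → F / R = G`. -/
def proj : FreeCentralExtension G →* G :=
  QuotientGroup.lift _ (FreeGroup.lift (id : G → G)) (commutator_le_right _ (presentationKernel G))

theorem proj_surjective : Function.Surjective (proj G) := fun g ↦
  ⟨(FreeGroup.of g : FreeGroup G), FreeGroup.lift_apply_of⟩

theorem ker_proj_le_center : (proj G).ker ≤ center (FreeCentralExtension G) := by
  intro y hy
  obtain ⟨r, rfl⟩ := QuotientGroup.mk_surjective y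
  refine mem_center_iff.2 fun x ↦ ?_
  obtain ⟨f, rfl⟩ := QuotientGroup.mk_surjective x
  rw [← commutatorElement_eq_one_iff_mul_comm]
  exact (QuotientGroup.eq_one_iff _).2 (commutator_mem_commutator (mem_top f) hy)

end FreeCentralExtension

open FreeCentralExtension

variable {G : Type*} [Group G]

theorem card_commutator_eq_relIndex_ker {X : Type*} [Group X] {f : X →* G}
    (hf : Function.Surjective f) : Nat.card (commutator G) = f.ker.relIndex (commutator X) := by
  rw [relIndex_ker, map_commutator_eq, MonoidHom.range_eq_top.2 hf, commutator_def]

variable (G) in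
theorem card_schurMultiplier_mul_card_commutator :
    Nat.card (SchurMultiplier G) * Nat.card (commutator G) =
      Nat.card (commutator (FreeCentralExtension G)) := by
  set R := presentationKernel G
  set K := ⁅(⊤ : Subgroup (FreeGroup G)), R⁆
  have hG : Nat.card (commutator G) = (R ⊓ commutator (FreeGroup G)).relIndex
      (commutator (FreeGroup G)) := by
    rw [inf_relIndex_right]
    exact card_commutator_eq_relIndex_ker fun g ↦ ⟨FreeGroup.of g, FreeGroup.lift_apply_of⟩
  have hX : Nat.card (commutator (FreeGroup G ⧸ K)) = K.relIndex (commutator (FreeGroup G)) := by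
    rw [card_commutator_eq_relIndex_ker (QuotientGroup.mk'_surjective K),
      QuotientGroup.ker_mk']
  rw [hG, hX]
  exact relIndex_mul_relIndex K _ _
    (le_inf (commutator_le_right _ _) (commutator_mono le_rfl le_top)) inf_le_right

variable (G) in
/-- The epicentre `Z*(G)`, the image in `G` of the centre of `F / [F, R]`. Equivalently, it is the
smallest central subgroup of `G` whose quotient is capable. -/
def epicenter : Subgroup G :=
  (center (FreeCentralExtension G)).map (proj G)

theorem commutator_le_epicenter {p : ℕ}
    (hroot : ∀ c ∈ commutator G, ∃ z ∈ center G, z ^ p = c)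
    (hgen : closure ({g : G | g ^ p ∈ commutator G} ∪ center G) = ⊤) :
    commutator G ≤ epicenter G := by
  rw [← map_comap_eq_self_of_surjective (proj_surjective G) (commutator G)]
  exact map_mono (comap_commutator_le_center (proj_surjective G) (ker_proj_le_center G) hroot hgen)

theorem card_schurMultiplier_mul_card_commutator_dvd {p N : ℕ} (hp : p.Prime)
    (hN : (commutator G).index = p ^ N) (hepi : commutator G ≤ epicenter G)
    (hx : ∃ x : G, x ^ p ∉ commutator G) :
    Nat.card (SchurMultiplier G) * Nat.card (commutator G) ∣ p ^ (N * (N - 1) / 2 - 1) := by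
  obtain ⟨g, hg⟩ := hx
  obtain ⟨x, rfl⟩ := proj_surjective G g
  have hcenter : (commutator G).comap (proj G) ≤ center (FreeCentralExtension G) :=
    (comap_mono hepi).trans (comap_map_eq_self (ker_proj_le_center G)).le
  have hcomm : commutator (FreeCentralExtension G) ≤ (commutator G).comap (proj G) := by
    rw [← map_le_iff_le_comap, map_commutator_eq]
    exact commutator_mono le_top le_top
  rw [card_schurMultiplier_mul_card_commutator]
  refine card_commutator_dvd_of_pow_notMem hp hcenter hcomm
    ((index_comap_of_surjective _ (proj_surjective G)).trans hN) (x := x) ?_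
  rwa [mem_comap, map_pow]

end SchurMultiplier

section ProdCommGroup

variable {E T : Type*} [Group E] [CommGroup T]

theorem commutator_prod_commGroup : commutator (E × T) = (commutator E).prod ⊥ := by
  rw [commutator_def, ← top_prod_top, commutator_prod_prod, ← commutator_def, ← commutator_def,
    commutator_eq_bot (G := T)]

theorem card_commutator_prod_commGroup :
    Nat.card (commutator (E × T)) = Nat.card (commutator E) := by
  rw [commutator_prod_commGroup, Nat.card_congr (prodEquiv _ _).toEquiv, Nat.card_prod, card_bot,
    mul_one]

theorem commutator_le_epicenter_prod_commGroup {p : ℕ}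
    (hroot : ∀ c ∈ commutator E, ∃ z ∈ center E, z ^ p = c)
    (hgen : closure ({e : E | e ^ p ∈ commutator E} ∪ center E) = ⊤) :
    commutator (E × T) ≤ epicenter (E × T) := by
  refine commutator_le_epicenter (p := p) ?_ ?_
  · rintro ⟨c, t⟩ hct
    rw [commutator_prod_commGroup] at hct
    obtain ⟨z, hz, hzc⟩ := hroot c hct.1
    refine ⟨(z, 1), ?_, Prod.ext hzc ((one_pow p).trans hct.2.symm)⟩
    rw [Subgroup.center_prod]
    exact ⟨hz, one_mem _⟩
  · set S := closure ({g : E × T | g ^ p ∈ commutator (E × T)} ∪ center (E × T))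
    have hinl : closure ({e : E | e ^ p ∈ commutator E} ∪ center E) ≤ S.comap (.inl E T) := by
      refine (closure_le _).2 fun e he ↦ subset_closure ?_
      rw [commutator_prod_commGroup, Subgroup.center_prod]
      exact he.imp (fun h ↦ ⟨h, one_pow p⟩) (fun h ↦ ⟨h, one_mem _⟩)
    refine top_unique fun ⟨e, t⟩ _ ↦ ?_
    have he : (e, 1) ∈ S := hinl (hgen ▸ mem_top e)
    have ht : (1, t) ∈ S := subset_closure <| .inr <| by
      rw [Subgroup.center_prod, CommGroup.center_eq_top]
      exact ⟨one_mem _, mem_top t⟩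
    simpa using mul_mem he ht

theorem exists_pow_notMem_commutator_prod {p : ℕ} (hp : 0 < p) (hT : p < Monoid.exponent T) :
    ∃ g : E × T, g ^ p ∉ commutator (E × T) := by
  have hndvd : ¬ Monoid.exponent T ∣ p := Nat.not_dvd_of_pos_of_lt hp hT
  obtain ⟨t, ht⟩ : ∃ t : T, t ^ p ≠ 1 := by
    simpa only [Monoid.exponent_dvd_iff_forall_pow_eq_one, not_forall] using hndvd
  refine ⟨(1, t), fun h ↦ ht ?_⟩
  rw [commutator_prod_commGroup] at h
  exact h.2

end ProdCommGroup

theorem exists_pow_eq_of_pow_eq_one {K : Type*} [Group K] [IsCyclic K] {a b : ℕ} (ha : a ≠ 0)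
    (hK : Nat.card K = a * b) {d : K} (hd : d ^ a = 1) : ∃ z : K, z ^ b = d := by
  obtain ⟨k, hk⟩ := IsCyclic.exists_generator (α := K)
  obtain ⟨i, rfl⟩ := mem_zpowers_iff.1 (hk d)
  have hdvd : (a * b : ℤ) ∣ a * i := by
    rw [← Nat.cast_mul, ← hK, ← orderOf_eq_card_of_forall_mem_zpowers hk,
      orderOf_dvd_iff_zpow_eq_one, mul_comm, zpow_mul, zpow_natCast, hd]
  obtain ⟨j, rfl⟩ := Int.dvd_of_mul_dvd_mul_left (Int.natCast_ne_zero.2 ha) hdvd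
  exact ⟨k ^ j, by rw [← zpow_natCast, ← zpow_mul, mul_comm]⟩

theorem commutator_eq_of_sup_center_eq_top {G : Type*} [Group G] {H : Subgroup G}
    (hH : H ⊔ center G = ⊤) : commutator G = ⁅H, H⁆ := by
  refine le_antisymm ?_ (commutator_mono le_top le_top)
  rw [commutator_def, commutator_le]
  intro a _ b _
  obtain ⟨g, hg, y, hy, rfl⟩ := mem_sup_of_normal_right.1 (hH ▸ mem_top a)
  obtain ⟨h, hh, z, hz, rfl⟩ := mem_sup_of_normal_right.1 (hH ▸ mem_top b)
  have hy : ⁅y, h * z⁆ = 1 :=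
    commutatorElement_eq_one_iff_mul_comm.2 (mem_center_iff.1 hy (h * z)).symm
  have hz : ⁅g, z⁆ = 1 := commutatorElement_eq_one_iff_mul_comm.2 (mem_center_iff.1 hz g)
  have hgh : ⁅g * y, h * z⁆ = ⁅g, h⁆ := by
    rw [commutatorElement_mul_left_eq_conj_mul, hy, commutatorElement_mul_right_eq_mul_conj, hz]
    group
  exact hgh ▸ commutator_mem_commutator hg hh

namespace IsExtraspecial

variable {p : ℕ} {H : Type*} [Group H]

theorem card_commutator (hH : IsExtraspecial p H) : Nat.card (commutator H) = p :=
  hH.1 ▸ hH.2.2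

theorem pow_eq_one_of_mem_commutator (hH : IsExtraspecial p H) {c : H}
    (hc : c ∈ commutator H) : c ^ p = 1 := by
  simpa [hH.card_commutator] using congrArg Subtype.val (pow_card_eq_one' (x := ⟨c, hc⟩))

theorem pow_mem_commutator (hH : IsExtraspecial p H) (h : H) : h ^ p ∈ commutator H := by
  rw [← hH.1, mem_center_iff]
  intro g
  have hc : ⁅h, g⁆ ∈ commutator H := commutator_mem_commutator (mem_top h) (mem_top g)
  rw [eq_comm, ← commutatorElement_eq_one_iff_mul_comm,
    commutatorElement_pow_left_of_mem_center (hH.1 ▸ hc), hH.pow_eq_one_of_mem_commutator hc]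

end IsExtraspecial

namespace IsTypeE2

variable {p m : ℕ} {E : Type*} [Group E]

theorem exists_isExtraspecial_sup_center_eq_top (hp : p.Prime) (hE : IsTypeE2 p m E) :
    ∃ H : Subgroup E, IsExtraspecial p H ∧ H ⊔ center E = ⊤ ∧
      ∀ c ∈ ⁅H, H⁆, ∃ z ∈ center E, z ^ p = c := by
  obtain ⟨H, K, hH, -, hKcyc, hKcard, hcomm, hsup, hinf⟩ := hE
  have hKcenter : K ≤ center E := by
    have htop : H ⊔ K ≤ centralizer K :=
      sup_le (fun h hh ↦ mem_centralizer_iff.2 fun k hk ↦ (hcomm h hh k hk).symm)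
        (le_centralizer K)
    rw [hsup, le_centralizer_iff, coe_top, centralizer_univ] at htop
    exact htop
  refine ⟨H, hH, top_unique (hsup ▸ sup_le_sup_left hKcenter H), fun c hc ↦ ?_⟩
  rw [← map_subtype_commutator] at hc
  obtain ⟨d, hd, rfl⟩ := hc
  have hdK : (d : E) ∈ K := by
    have hd' : d ∈ (H ⊓ K).subgroupOf H := by rwa [hinf, hH.1]
    exact hd'.2
  have hdp : (⟨d, hdK⟩ : K) ^ p = 1 :=
    Subtype.ext (by simpa using congrArg H.subtype (hH.pow_eq_one_of_mem_commutator hd))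
  obtain ⟨z, hz⟩ := exists_pow_eq_of_pow_eq_one hp.ne_zero (hKcard.trans (sq p)) hdp
  exact ⟨z, hKcenter z.2, congrArg Subtype.val hz⟩

theorem card_commutator (hp : p.Prime) (hE : IsTypeE2 p m E) :
    Nat.card (commutator E) = p := by
  obtain ⟨H, hH, hsup, -⟩ := hE.exists_isExtraspecial_sup_center_eq_top hp
  rw [commutator_eq_of_sup_center_eq_top hsup, ← map_subtype_commutator,
    card_map_of_injective H.subtype_injective, hH.card_commutator]

theorem exists_mem_center_pow_eq (hp : p.Prime) (hE : IsTypeE2 p m E) {c : E}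
    (hc : c ∈ commutator E) : ∃ z ∈ center E, z ^ p = c := by
  obtain ⟨H, -, hsup, hroot⟩ := hE.exists_isExtraspecial_sup_center_eq_top hp
  exact hroot c (commutator_eq_of_sup_center_eq_top hsup ▸ hc)

theorem closure_eq_top (hp : p.Prime) (hE : IsTypeE2 p m E) :
    closure ({e : E | e ^ p ∈ commutator E} ∪ center E) = ⊤ := by
  obtain ⟨H, hH, hsup, -⟩ := hE.exists_isExtraspecial_sup_center_eq_top hp
  refine top_unique (hsup ▸ sup_le (fun h hh ↦ subset_closure (.inl ?_))
    fun z hz ↦ subset_closure (.inr hz))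
  rw [Set.mem_ofPred_eq, commutator_eq_of_sup_center_eq_top hsup, ← map_subtype_commutator]
  exact ⟨⟨h, hh⟩ ^ p, hH.pow_mem_commutator _, rfl⟩

end IsTypeE2

theorem schurMultiplier_typeE2_times_nonelementary_le_general {p n : ℕ} (hp : p.Prime)
    {G : Type*} [Group G] (hG : Nat.card G = p ^ n) (hcomm : Nat.card (commutator G) = p)
    (hepi : commutator G ≤ epicenter G) (hx : ∃ x : G, x ^ p ∉ commutator G) :
    Nat.card (SchurMultiplier G) ∣ p ^ ((n - 1) * (n - 2) / 2 - 2) := by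
  have hmul : p * (commutator G).index = p ^ n := by rw [← hG, ← hcomm, card_mul_index]
  have hindex : (commutator G).index = p ^ (n - 1) := by
    rcases n with _ | n
    · exact absurd (Nat.dvd_one.1 (Dvd.intro _ hmul)) hp.ne_one
    · exact Nat.eq_of_mul_eq_mul_left hp.pos (hmul.trans (pow_succ' p n))
  have hdvd : Nat.card (SchurMultiplier G) * p ∣ p ^ ((n - 1) * (n - 2) / 2 - 1) := by
    have h := card_schurMultiplier_mul_card_commutator_dvd hp hindex hepi hx
    rwa [hcomm] at h
  rw [← Nat.sub_sub _ 1 1]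
  generalize (n - 1) * (n - 2) / 2 - 1 = e at hdvd ⊢
  rcases e with _ | e
  · exact absurd (Nat.dvd_one.1 (dvd_of_mul_left_dvd hdvd)) hp.ne_one
  · exact Nat.dvd_of_mul_dvd_mul_right hp.pos hdvd

/-- If `E` is of type `E(2)` of order `p^(2m+2)` and `T` is a finite abelian `p`-group
that is not elementary abelian, then `G = E × T`, of order `p^n`, satisfies
`|M(G)| ≤ p^((n-1)(n-2)/2 - 2)`. -/
theorem schurMultiplier_typeE2_times_nonelementary_le {p m n : ℕ} (hp : p.Prime)
    {E : Type*} [Group E] (hE : IsTypeE2 p m E) (hEcard : Nat.card E = p ^ (2 * m + 2))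
    {T : Type*} [CommGroup T] [Finite T] (hT : IsPGroup p T)
    (hTexp : p < Monoid.exponent T)
    (hG : Nat.card (E × T) = p ^ n) :
    Nat.card (SchurMultiplier (E × T)) ≤ p ^ ((n - 1) * (n - 2) / 2 - 2) :=
  Nat.le_of_dvd (pow_pos hp.pos _) <| schurMultiplier_typeE2_times_nonelementary_le_general hp hG
    (card_commutator_prod_commGroup.trans (hE.card_commutator hp))
    (commutator_le_epicenter_prod_commGroup (fun _ ↦ hE.exists_mem_center_pow_eq hp)
      (hE.closure_eq_top hp))
    (exists_pow_notMem_commutator_prod hp.pos hTexp)
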